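/- Let M = cQ + εD ∈ 𝔻ℍ[t] be a bounded monic reduced motion polynomial with c ∈ ℝ[t], Q, D ∈ ℍ[t], and mrpf(Q) = 1. Let g ∈ ℝ[t] be the greatest common monic real polynomial divisor of c, D·Q*, and Q*·D. If M admits a factorization into monic linear motion polynomial factors, then c·g divides D·D* in ℝ[t]. -/

import Mathlib

open Polynomial DualNumber TrivSqZeroExt

noncomputable section

/-- The real quaternions. -/
abbrev Hq : Type := Quaternion ℝ

/-- The dual quaternions. -/
abbrev DHq : Type := DualNumber Hq

/-- Conjugation of a dual quaternion: `(p + ε d)* = p* + ε d*`. -/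
instance : Star DHq := ⟨fun x => inl (star x.fst) + inr (star x.snd)⟩

/-- Coefficient-wise (quaternion) conjugation of a polynomial. -/
def cstar {R : Type*} [Semiring R] [Star R] (A : R[X]) : R[X] :=
  A.sum fun n a => Polynomial.C (star a) * Polynomial.X ^ n

/-- The embedding `ℝ[t] → ℍ[t]`. -/
def qPoly (f : ℝ[X]) : Hq[X] := f.map (algebraMap ℝ Hq)

/-- The embedding `ℍ[t] → 𝔻ℍ[t]` (primal part). -/
def dhQ (P : Hq[X]) : DHq[X] := P.map (inlHom Hq Hq)

/-- The embedding `ℝ[t] → 𝔻ℍ[t]`. -/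
def dPoly (f : ℝ[X]) : DHq[X] := dhQ (qPoly f)

/-- The dual quaternion polynomial `P + ε D` with primal part `P` and dual part `D`. -/
def mp (P D : Hq[X]) : DHq[X] := dhQ P + Polynomial.C ε * dhQ D

/-- The primal part of a dual quaternion polynomial. -/
def primal (A : DHq[X]) : Hq[X] := A.map (fstHom ℝ Hq Hq).toRingHom

/-- A motion polynomial: a dual quaternion polynomial whose norm polynomial
`ν(M) = M·M*` is a nonzero real polynomial. -/
def IsMotion (M : DHq[X]) : Prop := ∃ f : ℝ[X], f ≠ 0 ∧ M * cstar M = dPoly f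

/-- A real polynomial divides a quaternion polynomial. -/
def RDvdQ (f : ℝ[X]) (A : Hq[X]) : Prop := ∃ B : Hq[X], A = qPoly f * B

/-- A real polynomial divides a dual quaternion polynomial. -/
def RDvdD (f : ℝ[X]) (A : DHq[X]) : Prop := ∃ B : DHq[X], A = dPoly f * B

/-- `g` is the greatest common monic real polynomial divisor of a quaternion polynomial `A`
(with itself), i.e. `g = mrpf A`. -/
def IsMrpfQ (g : ℝ[X]) (A : Hq[X]) : Prop :=
  g.Monic ∧ RDvdQ g A ∧ ∀ f : ℝ[X], f.Monic → RDvdQ f A → f ∣ g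

/-- `g` is the greatest common monic real polynomial divisor of `c ∈ ℝ[t]` and a quaternion
polynomial `A`, i.e. `g = mrpf(c, A)`. -/
def IsMrpf2 (g : ℝ[X]) (c : ℝ[X]) (A : Hq[X]) : Prop :=
  g.Monic ∧ g ∣ c ∧ RDvdQ g A ∧
    ∀ f : ℝ[X], f.Monic → f ∣ c → RDvdQ f A → f ∣ g

/-- `g` is the greatest common monic real polynomial divisor of `c ∈ ℝ[t]` and two quaternion
polynomials `A` and `B`, i.e. `g = mrpf(c, A, B)`. -/
def IsMrpf3 (g : ℝ[X]) (c : ℝ[X]) (A B : Hq[X]) : Prop :=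
  g.Monic ∧ g ∣ c ∧ RDvdQ g A ∧ RDvdQ g B ∧
    ∀ f : ℝ[X], f.Monic → f ∣ c → RDvdQ f A → RDvdQ f B → f ∣ g

/-- A quaternion polynomial is reduced: `mrpf = 1`, i.e. it has only constant real
polynomial factors. -/
def ReducedQ (A : Hq[X]) : Prop := ∀ f : ℝ[X], f.Monic → RDvdQ f A → f = 1

/-- A dual quaternion polynomial is reduced: `mrpf = 1`. -/
def ReducedD (A : DHq[X]) : Prop := ∀ f : ℝ[X], f.Monic → RDvdD f A → f = 1

/-- Boundedness of a (monic reduced) motion polynomial: `mrpf` of its primal part has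
no real root, equivalently no linear real polynomial `t - a` divides the primal part. -/
def BoundedD (M : DHq[X]) : Prop :=
  ∀ a : ℝ, ¬ RDvdQ (Polynomial.X - Polynomial.C a) (primal M)

/-- A generic motion polynomial: monic, a motion polynomial, with `mrpf` of the primal
part equal to `1`. -/
def GenericD (M : DHq[X]) : Prop :=
  M.Monic ∧ IsMotion M ∧ ReducedQ (primal M)

/-- The monic linear dual quaternion polynomial `t - p - ε d`. -/
def lin (p d : Hq) : DHq[X] := mp (Polynomial.X - Polynomial.C p) (-Polynomial.C d)

/-- `M` admits a factorization into monic linear motion polynomial factors. -/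
def HasLinFact (M : DHq[X]) : Prop :=
  ∃ L : List DHq, (∀ h ∈ L, IsMotion (Polynomial.X - Polynomial.C h)) ∧
    M = (L.map fun h => Polynomial.X - Polynomial.C h).prod

end

noncomputable section

theorem cs_coeff (A : Hq[X]) (n : ℕ) : (cstar A).coeff n = star (A.coeff n) := by
  unfold cstar
  rw [Polynomial.sum_def, Polynomial.finsetSum_coeff]
  simp only [coeff_C_mul, coeff_X_pow]
  by_cases h : n ∈ A.support
  · rw [Finset.sum_eq_single n]
    · simp
    · intro b _ hb
      simp [Ne.symm hb]
    · intro h'; exact absurd h h'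
  · rw [Finset.sum_eq_zero]
    · rw [notMem_support_iff.mp h, star_zero]
    · intro b hb
      have : n ≠ b := by rintro rfl; exact h hb
      simp [this]

theorem cs_add (A B : Hq[X]) : cstar (A + B) = cstar A + cstar B := by
  ext1 n; simp [cs_coeff]

theorem cs_cs (A : Hq[X]) : cstar (cstar A) = A := by
  ext1 n; simp only [cs_coeff, star_star]

theorem cs_mul (A B : Hq[X]) : cstar (A * B) = cstar B * cstar A := by
  ext1 n
  rw [cs_coeff, coeff_mul, coeff_mul, star_sum, ← Finset.Nat.sum_antidiagonal_swap]
  apply Finset.sum_congr rfl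
  intro x _
  simp only [star_mul, cs_coeff, Prod.fst_swap, Prod.snd_swap]

theorem cs_q (f : ℝ[X]) : cstar (qPoly f) = qPoly f := by
  ext1 n
  rw [cs_coeff, qPoly, coeff_map]
  exact Quaternion.star_coe _

theorem cs_C (x : Hq) : cstar (C x) = C (star x) := by
  ext1 n
  rw [cs_coeff, coeff_C, coeff_C]
  split_ifs <;> simp

theorem cs_XC (p : Hq) : cstar (X - C p) = X - C (star p) := by
  ext1 n
  rw [cs_coeff, coeff_sub, coeff_sub, coeff_C, coeff_C, coeff_X, star_sub]
  split_ifs <;> simp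

theorem q_mul (f g : ℝ[X]) : qPoly (f * g) = qPoly f * qPoly g := Polynomial.map_mul _
theorem q_add (f g : ℝ[X]) : qPoly (f + g) = qPoly f + qPoly g := Polynomial.map_add _
theorem q_one : qPoly 1 = 1 := Polynomial.map_one _

theorem q_ne {f : ℝ[X]} (h : f ≠ 0) : qPoly f ≠ 0 :=
  (Polynomial.map_ne_zero_iff (algebraMap ℝ Hq).injective).mpr h

theorem q_comm (f : ℝ[X]) (A : Hq[X]) : A * qPoly f = qPoly f * A := by
  induction f using Polynomial.induction_on' with
  | add f g hf hg => rw [q_add, mul_add, add_mul, hf, hg]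
  | monomial n a =>
    rw [qPoly, map_monomial, ← C_mul_X_pow_eq_monomial, ← mul_assoc, mul_assoc _ (X ^ n) A,
      X_pow_mul (p := A), ← mul_assoc]
    congr 1
    ext1 k
    rw [coeff_mul_C, coeff_C_mul]
    exact (Algebra.commutes a _).symm

theorem q_left (f : ℝ[X]) (A B : Hq[X]) : A * (qPoly f * B) = qPoly f * (A * B) := by
  rw [← mul_assoc, q_comm, mul_assoc]

theorem rd_add {f A B} (h : RDvdQ f A) (h' : RDvdQ f B) : RDvdQ f (A + B) := by
  obtain ⟨a, rfl⟩ := h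
  obtain ⟨b, rfl⟩ := h'
  exact ⟨a + b, by rw [mul_add]⟩

theorem rd_neg {f A} (h : RDvdQ f A) : RDvdQ f (-A) := by
  obtain ⟨a, rfl⟩ := h
  exact ⟨-a, by rw [mul_neg]⟩

theorem rd_sub {f A B} (h : RDvdQ f A) (h' : RDvdQ f B) : RDvdQ f (A - B) := by
  rw [sub_eq_add_neg]; exact rd_add h (rd_neg h')

theorem rd_r {f A} (h : RDvdQ f A) (B) : RDvdQ f (A * B) := by
  obtain ⟨a, rfl⟩ := h
  exact ⟨a * B, by rw [mul_assoc]⟩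

theorem rd_l {f A} (h : RDvdQ f A) (B) : RDvdQ f (B * A) := by
  obtain ⟨a, rfl⟩ := h
  exact ⟨B * a, by rw [q_left]⟩

theorem rd_cs {f A} (h : RDvdQ f A) : RDvdQ f (cstar A) := by
  obtain ⟨a, rfl⟩ := h
  exact ⟨cstar a, by rw [cs_mul, cs_q, q_comm]⟩

theorem rd_mono {f g A} (hfg : f ∣ g) (h : RDvdQ g A) : RDvdQ f A := by
  obtain ⟨k, rfl⟩ := hfg
  obtain ⟨a, rfl⟩ := h
  exact ⟨qPoly k * a, by rw [q_mul, mul_assoc]⟩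

theorem rd_q {f g} (h : f ∣ g) (A) : RDvdQ f (qPoly g * A) := rd_mono h ⟨A, rfl⟩

theorem rd_scale {f A} (c) (h : RDvdQ f A) : RDvdQ (c * f) (qPoly c * A) := by
  obtain ⟨a, rfl⟩ := h
  exact ⟨a, by rw [q_mul, mul_assoc]⟩

theorem rd_cancel {f A} {c : ℝ[X]} (hc : c ≠ 0) (h : RDvdQ (c * f) (qPoly c * A)) : RDvdQ f A := by
  obtain ⟨a, h⟩ := h
  refine ⟨a, mul_left_cancel₀ (q_ne hc) ?_⟩
  rw [h, q_mul, mul_assoc]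

theorem rd_cop {f g : ℝ[X]} {A} (hc : IsCoprime f g) (h : RDvdQ f (qPoly g * A)) : RDvdQ f A := by
  obtain ⟨a, b, hab⟩ := hc
  have : A = qPoly f * (qPoly a * A) + qPoly b * (qPoly g * A) := by
    rw [← mul_assoc, ← mul_assoc, ← q_mul, ← q_mul, ← add_mul, ← q_add, mul_comm f a, hab, q_one,
      one_mul]
  rw [this]
  exact rd_add ⟨_, rfl⟩ (rd_l h _)

/-- norm of `t - p` -/
def NN (p : Hq) : ℝ[X] := X ^ 2 - C (2 * p.re) * X + C (Quaternion.normSq p)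

theorem q_NN (p : Hq) : qPoly (NN p) = (X - C p) * (X - C (star p)) := by
  have h1 : (algebraMap ℝ Hq) (2 * p.re) = p + star p := by
    rw [Quaternion.self_add_star, map_mul]
    congr 1
  have h2 : (algebraMap ℝ Hq) (Quaternion.normSq p) = p * star p := by
    rw [Quaternion.self_mul_star]; rfl
  rw [qPoly, NN]
  simp only [Polynomial.map_add, Polynomial.map_sub, Polynomial.map_mul, Polynomial.map_pow,
    map_X, map_C, h1, h2]
  rw [sub_mul, mul_sub, mul_sub, X_mul_C, C_mul, C_add, add_mul, sq]
  abel

theorem NN_star (p : Hq) : NN (star p) = NN p := by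
  simp [NN]

theorem q_NN' (p : Hq) : qPoly (NN p) = (X - C (star p)) * (X - C p) := by
  rw [← NN_star, q_NN, star_star]

theorem NN_monic (p : Hq) : (NN p).Monic := by
  unfold NN; monicity!

theorem NN_deg (p : Hq) : (NN p).natDegree = 2 := by
  unfold NN; compute_degree!

theorem NN_irr (p : Hq) (hp : star p ≠ p) : Irreducible (NN p) := by
  rw [Polynomial.Monic.irreducible_iff_roots_eq_zero_of_degree_le_three (NN_monic p)
    (by rw [NN_deg]) (by rw [NN_deg]; norm_num)]
  rw [Multiset.eq_zero_iff_forall_notMem]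
  intro a ha
  rw [mem_roots (NN_monic p).ne_zero, IsRoot.def] at ha
  simp only [NN, eval_add, eval_sub, eval_mul, eval_pow, eval_X, eval_C,
    Quaternion.normSq_def'] at ha
  have hI : p.imI = 0 := by
    nlinarith [sq_nonneg (a - p.re), sq_nonneg p.imI, sq_nonneg p.imJ, sq_nonneg p.imK]
  have hJ : p.imJ = 0 := by
    nlinarith [sq_nonneg (a - p.re), sq_nonneg p.imI, sq_nonneg p.imJ, sq_nonneg p.imK]
  have hK : p.imK = 0 := by
    nlinarith [sq_nonneg (a - p.re), sq_nonneg p.imI, sq_nonneg p.imJ, sq_nonneg p.imK]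
  apply hp
  ext <;> simp [hI, hJ, hK]

theorem XC_ne (p : Hq) : (X - C p : Hq[X]) ≠ 0 := X_sub_C_ne_zero p

/-- `N ∣ (t-p) A` gives `A = (t-p*) B`. -/
theorem fac {p A} (h : RDvdQ (NN p) ((X - C p) * A)) : ∃ B, A = (X - C (star p)) * B := by
  obtain ⟨B, hB⟩ := h
  refine ⟨B, mul_left_cancel₀ (XC_ne p) ?_⟩
  rw [hB, q_NN, mul_assoc]

theorem fac' {p A} (h : RDvdQ (NN p) ((X - C (star p)) * A)) : ∃ B, A = (X - C p) * B := by
  rw [← NN_star] at h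
  simpa using fac h

theorem ldiv (p : Hq) (A : Hq[X]) : ∃ s e, A = (X - C p) * s + C e := by
  refine ⟨A /ₘ (X - C p), (A %ₘ (X - C p)).coeff 0, ?_⟩
  have h1 := modByMonic_add_div A (X - C p)
  have h2 : (A %ₘ (X - C p)).degree < 1 := by
    have := degree_modByMonic_lt A (monic_X_sub_C p)
    rwa [degree_X_sub_C] at this
  have h4 : (A %ₘ (X - C p)).natDegree = 0 := by
    by_cases h0 : A %ₘ (X - C p) = 0
    · rw [h0, natDegree_zero]
    · have := (natDegree_lt_iff_degree_lt h0 (n := 1)).mpr (by exact_mod_cast h2)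
      omega
  have h3 := eq_C_of_natDegree_eq_zero h4
  rw [← h3, add_comm]
  exact h1.symm

theorem lemA {p : Hq} {E Q : Hq[X]} (h1 : RDvdQ (NN p) ((X - C p) * E))
    (h2 : RDvdQ (NN p) (E * (X - C (star p)))) (h3 : RDvdQ (NN p) (E * Q))
    (h4 : ¬ RDvdQ (NN p) E) : RDvdQ (NN p) ((X - C p) * Q) := by
  obtain ⟨E2, rfl⟩ := fac h1
  obtain ⟨s, e, rfl⟩ := ldiv p E2
  have hE : (X - C (star p)) * ((X - C p) * s + C e) = qPoly (NN p) * s + (X - C (star p)) * C e := by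
    rw [mul_add, ← mul_assoc, q_NN']
  rw [hE] at h2 h3 h4
  have he : e ≠ 0 := by
    rintro rfl
    exact h4 ⟨s, by simp⟩
  have key : ∀ B, RDvdQ (NN p) ((qPoly (NN p) * s + (X - C (star p)) * C e) * B) →
      ∃ B', C e * B = (X - C p) * B' := by
    intro B hB
    apply fac'
    have := rd_sub hB (⟨s * B, rfl⟩ : RDvdQ (NN p) (qPoly (NN p) * (s * B)))
    convert this using 1
    rw [add_mul, mul_assoc, add_sub_cancel_left, mul_assoc]
  obtain ⟨B, hB⟩ := key _ h2
  obtain ⟨B', hB'⟩ := key _ h3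
  have hBd : B.natDegree = 0 := by
    have h := congrArg natDegree hB
    have hB0 : B ≠ 0 := by
      rintro rfl
      rw [mul_zero] at hB
      exact mul_ne_zero (C_ne_zero.mpr he) (XC_ne _) hB
    rw [natDegree_mul (C_ne_zero.mpr he) (XC_ne _), natDegree_mul (XC_ne _) hB0] at h
    simp only [natDegree_C, natDegree_X_sub_C] at h
    omega
  rw [eq_C_of_natDegree_eq_zero hBd] at hB
  set b := B.coeff 0
  have c1 := congrArg (fun A => coeff A 1) hB
  have c0 := congrArg (fun A => coeff A 0) hB
  simp [coeff_C] at c1 c0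
  rw [← c1] at c0
  have hc : (C e⁻¹ : Hq[X]) * (X - C p) = (X - C (star p)) * C e⁻¹ := by
    rw [mul_sub, sub_mul, X_mul_C, ← C_mul, ← C_mul]
    congr 2
    rw [eq_mul_inv_iff_mul_eq₀ he, mul_assoc, ← c0, inv_mul_cancel_left₀ he]
  have hQ : Q = C e⁻¹ * ((X - C p) * B') := by
    rw [← hB', ← mul_assoc, ← C_mul, inv_mul_cancel₀ he, C_1, one_mul]
  rw [hQ, ← mul_assoc (C e⁻¹), hc]
  exact ⟨C e⁻¹ * B', by rw [q_NN]; simp only [mul_assoc]⟩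

theorem NN_ne (p : Hq) : NN p ≠ 0 := (NN_monic p).ne_zero

theorem lemB {p : Hq} (hp : star p ≠ p) {Q : Hq[X]}
    (hQ : ¬ RDvdQ (NN p) ((X - C p) * Q)) (n : ℕ) : ∀ (g : ℝ[X]) (E : Hq[X]), g ≠ 0 →
    g.natDegree = n → RDvdQ (NN p * g) ((X - C p) * E * (X - C (star p))) →
    RDvdQ g (E * Q) → RDvdQ g E := by
  induction n using Nat.strong_induction_on with
  | _ n ih =>
  intro g E hg hn h1 h2
  by_cases hd : NN p ∣ g
  · obtain ⟨g2, rfl⟩ := hd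
    have hg2 : g2 ≠ 0 := right_ne_zero_of_mul hg
    have hE : RDvdQ (NN p) E := by
      by_contra hE
      refine hQ (lemA ?_ ?_ (rd_mono ⟨g2, rfl⟩ h2) hE)
      · have := rd_r h1 (X - C p)
        rw [mul_assoc, ← q_NN', q_comm] at this
        exact rd_mono ⟨g2, rfl⟩ (rd_cancel (NN_ne p) this)
      · have := rd_l h1 (X - C (star p))
        rw [mul_assoc (X - C p), ← mul_assoc (X - C (star p)), ← q_NN'] at this
        exact rd_mono ⟨g2, rfl⟩ (rd_cancel (NN_ne p) this)
    obtain ⟨E', rfl⟩ := hE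
    apply rd_scale
    refine ih g2.natDegree ?_ g2 E' hg2 rfl ?_ ?_
    · rw [← hn, natDegree_mul (NN_ne p) hg2, NN_deg]; omega
    · rw [q_left, mul_assoc] at h1
      exact rd_cancel (NN_ne p) h1
    · rw [mul_assoc] at h2
      exact rd_cancel (NN_ne p) h2
  · have hc : IsCoprime g (NN p) := (((NN_irr p hp).coprime_iff_not_dvd).mpr hd).symm
    have h3 := rd_r (rd_l (rd_mono ⟨NN p, mul_comm _ _⟩ h1) (X - C (star p))) (X - C p)
    have e : (X - C (star p)) * ((X - C p) * E * (X - C (star p))) * (X - C p)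
        = qPoly (NN p) * (qPoly (NN p) * E) := by
      rw [← q_comm _ E]; nth_rw 1 [q_NN']; rw [q_NN']; simp only [mul_assoc]
    rw [e] at h3
    exact rd_cop hc (rd_cop hc h3)

def Phi (c : ℝ[X]) (Q D : Hq[X]) : Prop :=
  ∀ g : ℝ[X], g ∣ c → RDvdQ g (D * cstar Q) → RDvdQ g (cstar Q * D) → RDvdQ (c * g) (D * cstar D)

theorem transl {c Q D} (x : Hq) (h : Phi c Q D) : Phi c Q (D + qPoly c * (C x * Q)) := by
  intro g hgc h1 h2
  have h1' : RDvdQ g (D * cstar Q) := by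
    have := rd_sub h1 (rd_q hgc (C x * Q * cstar Q))
    rwa [add_mul, mul_assoc, add_sub_cancel_right] at this
  have h2' : RDvdQ g (cstar Q * D) := by
    have := rd_sub h2 (rd_q hgc (cstar Q * (C x * Q)))
    rwa [mul_add, q_left, add_sub_cancel_right] at this
  have h0 := h g hgc h1' h2'
  have h3 : RDvdQ g (Q * cstar D) := by
    have := rd_cs h1'
    rwa [cs_mul, cs_cs] at this
  have e : (D + qPoly c * (C x * Q)) * cstar (D + qPoly c * (C x * Q)) =
      D * cstar D + qPoly c * (D * cstar Q * C (star x) + C x * (Q * cstar D)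
        + qPoly c * (C x * Q * (cstar Q * C (star x)))) := by
    rw [cs_add, cs_mul (qPoly c), cs_q, cs_mul, cs_C, q_comm]
    simp only [mul_add, add_mul, mul_assoc, q_left]
    abel
  rw [e]
  exact rd_add h0 (rd_scale c (rd_add (rd_add (rd_r h1' _) (rd_l h3 _)) (rd_q hgc _)))

theorem lemC {p : Hq} {Q D : Hq[X]} (h1 : RDvdQ (NN p) (cstar Q * ((X - C p) * D)))
    (h2 : ¬ RDvdQ (NN p) ((X - C (star p)) * Q)) : RDvdQ (NN p) ((X - C p) * D) := by
  obtain ⟨s, e, rfl⟩ := ldiv p Q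
  have he : e ≠ 0 := by
    rintro rfl
    exact h2 ⟨s, by rw [q_NN']; simp [mul_assoc]⟩
  have e1 : cstar ((X - C p) * s + C e) * ((X - C p) * D) =
      qPoly (NN p) * (cstar s * D) + C (star e) * ((X - C p) * D) := by
    rw [cs_add, cs_mul, cs_XC, cs_C, add_mul, q_NN', ← q_NN', ← q_left, q_NN']
    simp only [mul_assoc]
  rw [e1] at h1
  have := rd_l (rd_sub h1 (rd_q dvd_rfl (cstar s * D))) (C (star e)⁻¹)
  rwa [add_sub_cancel_left, ← mul_assoc, ← C_mul, inv_mul_cancel₀ (star_ne_zero.mpr he), C_1,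
    one_mul] at this

def Redd (c : ℝ[X]) (Q D : Hq[X]) : Prop :=
  ∀ f : ℝ[X], f.Monic → RDvdQ f (qPoly c * Q) → RDvdQ f D → f = 1

theorem NN_ne_one (p : Hq) : NN p ≠ 1 := by
  intro h
  have := NN_deg p
  rw [h, natDegree_one] at this
  omega

theorem norm_real (D : Hq[X]) : ∃ f : ℝ[X], D * cstar D = qPoly f := by
  have h : D * cstar D ∈ Polynomial.lifts (algebraMap ℝ Hq) := by
    rw [Polynomial.lifts_iff_coeff_lifts]
    intro n
    have h1 : star ((D * cstar D).coeff n) = (D * cstar D).coeff n := by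
      rw [← cs_coeff, cs_mul, cs_cs]
    exact ⟨_, (Quaternion.star_eq_self.mp h1).symm⟩
  obtain ⟨f, hf⟩ := (Polynomial.mem_lifts _).mp h
  exact ⟨f, hf.symm⟩

theorem norm_P (p : Hq) (D : Hq[X]) :
    (X - C p) * D * cstar ((X - C p) * D) = qPoly (NN p) * (D * cstar D) := by
  obtain ⟨f, hf⟩ := norm_real D
  have : (X - C p) * D * cstar ((X - C p) * D) = (X - C p) * (D * cstar D) * (X - C (star p)) := by
    rw [cs_mul, cs_XC]; simp only [mul_assoc]
  rw [this, hf, q_comm, mul_assoc, ← q_NN, q_comm]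

/-- step with a purely primal factor -/
theorem stepP {p : Hq} (hp : star p ≠ p) {c : ℝ[X]} {Q D : Hq[X]} (hc : c ≠ 0) (hQ : ReducedQ Q)
    (h : Phi c Q D) : ∃ c' Q', c' ≠ 0 ∧ ReducedQ Q' ∧ qPoly c' * Q' = (X - C p) * (qPoly c * Q) ∧
      (Redd c' Q' ((X - C p) * D) → Phi c' Q' ((X - C p) * D)) := by
  by_cases hN : RDvdQ (NN p) ((X - C p) * Q)
  · obtain ⟨Q', rfl⟩ := fac hN
    refine ⟨c * NN p, Q', mul_ne_zero hc (NN_ne p), ?_, ?_, ?_⟩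
    · intro f hf hd
      exact hQ f hf (rd_l hd _)
    · rw [q_left, q_mul, mul_assoc, q_NN, mul_assoc]
    · intro hR g hgc h1 h2
      by_cases hd : NN p ∣ g
      · exfalso
        have hX : ¬ RDvdQ (NN p) ((X - C (star p)) * Q') := fun hh =>
          NN_ne_one p (hQ _ (NN_monic p) hh)
        have h3 := lemC (rd_mono hd h2) hX
        exact NN_ne_one p (hR _ (NN_monic p) (rd_q ⟨c, mul_comm _ _⟩ _) h3)
      · have hcp : IsCoprime g (NN p) := (((NN_irr p hp).coprime_iff_not_dvd).mpr hd).symm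
        have hg : g ∣ c := hcp.dvd_of_dvd_mul_right hgc
        have h3 := rd_l h1 (X - C (star p))
        rw [mul_assoc, ← mul_assoc, ← q_NN'] at h3
        have h4 := rd_r (rd_cop hcp h3) (X - C p)
        have h5 : RDvdQ (c * g) (D * cstar D) := by
          apply h g hg
          · rw [cs_mul, cs_XC, star_star, ← mul_assoc]; exact h4
          · rw [cs_mul, cs_XC, star_star, mul_assoc]; exact h2
        rw [norm_P, show c * NN p * g = NN p * (c * g) by ring]
        exact rd_scale _ h5
  · refine ⟨c, (X - C p) * Q, hc, ?_, by rw [q_left], ?_⟩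
    · intro f hf hd
      by_cases hNf : NN p ∣ f
      · exact absurd (rd_mono hNf hd) hN
      · have hcp : IsCoprime f (NN p) := (((NN_irr p hp).coprime_iff_not_dvd).mpr hNf).symm
        apply hQ f hf
        apply rd_cop hcp
        rw [q_NN', mul_assoc]
        exact rd_l hd _
    · intro _ g hgc h1 h2
      have e1 : (X - C p) * D * cstar ((X - C p) * Q) =
          (X - C p) * (D * cstar Q) * (X - C (star p)) := by
        rw [cs_mul, cs_XC]; simp only [mul_assoc]
      have e2 : cstar ((X - C p) * Q) * ((X - C p) * D) = qPoly (NN p) * (cstar Q * D) := by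
        rw [cs_mul, cs_XC, ← q_left, q_NN']; simp only [mul_assoc]
      rw [e1] at h1
      rw [e2] at h2
      rw [norm_P]
      by_cases hd : NN p ∣ g
      · obtain ⟨g1, rfl⟩ := hd
        have hg1 : g1 ≠ 0 := by
          rintro rfl
          rw [mul_zero, zero_dvd_iff] at hgc
          exact hc hgc
        have h3 := rd_cancel (NN_ne p) h2
        have h4 : RDvdQ g1 (D * cstar Q) := by
          refine lemB hp hN _ g1 _ hg1 rfl h1 ?_
          have := rd_l h3 Q
          have e : D * cstar Q * Q = Q * (cstar Q * D) := by
            obtain ⟨f, hf⟩ := norm_real Q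
            obtain ⟨f', hf'⟩ := norm_real (cstar Q)
            rw [cs_cs] at hf'
            have : f = f' := by
              by_cases hQ0 : Q = 0
              · subst hQ0
                rw [zero_mul] at hf
                rw [mul_zero] at hf'
                exact Polynomial.map_injective _ (algebraMap ℝ Hq).injective (hf.symm.trans hf')
              · have h5 : Q * qPoly f' = Q * qPoly f := by
                  rw [← hf', ← mul_assoc, hf, q_comm]
                exact (Polynomial.map_injective _ (algebraMap ℝ Hq).injective
                  (mul_left_cancel₀ hQ0 h5)).symm
            rw [mul_assoc, hf', ← mul_assoc, hf, q_comm, this]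
          rw [e]
          exact this
        have h5 := h g1 ((Dvd.intro_left _ rfl).trans hgc) h4 h3
        rw [show c * (NN p * g1) = NN p * (c * g1) by ring]
        exact rd_scale _ h5
      · have hcp : IsCoprime g (NN p) := (((NN_irr p hp).coprime_iff_not_dvd).mpr hd).symm
        refine rd_l (h g hgc ?_ (rd_cop hcp h2)) _
        have h3 := rd_r (rd_l h1 (X - C (star p))) (X - C p)
        have e : (X - C (star p)) * ((X - C p) * (D * cstar Q) * (X - C (star p))) * (X - C p)
            = qPoly (NN p) * (qPoly (NN p) * (D * cstar Q)) := by
          rw [← q_comm _ (D * cstar Q)]; nth_rw 1 [q_NN']; rw [q_NN']; simp only [mul_assoc]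
        rw [e] at h3
        exact rd_cop hcp (rd_cop hcp h3)

/-- step with a general rotation factor -/
theorem stepG {p x : Hq} (hp : star p ≠ p) {c : ℝ[X]} {Q D : Hq[X]} (hc : c ≠ 0) (hQ : ReducedQ Q)
    (h : Phi c Q D) : ∃ c' Q', c' ≠ 0 ∧ ReducedQ Q' ∧ qPoly c' * Q' = (X - C p) * (qPoly c * Q) ∧
      (Redd c' Q' ((X - C p) * D + C (p * x - x * p) * (qPoly c * Q)) →
        Phi c' Q' ((X - C p) * D + C (p * x - x * p) * (qPoly c * Q))) := by
  obtain ⟨c', Q', h1, h2, h3, h4⟩ := stepP hp hc hQ (transl (-x) h)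
  refine ⟨c', Q', h1, h2, h3, ?_⟩
  have e : (X - C p) * D + C (p * x - x * p) * (qPoly c * Q) =
      (X - C p) * (D + qPoly c * (C (-x) * Q)) + qPoly c' * (C x * Q') := by
    rw [← q_left c', h3, ← q_left c (C (-x))]
    simp only [C_sub, C_mul, C_neg, mul_add, sub_mul, mul_sub, neg_mul, mul_neg, mul_assoc]
    simp only [← mul_assoc, X_mul_C]
    abel
  rw [e]
  intro hR
  apply transl
  apply h4
  intro f hf ha hb
  refine hR f hf ha (rd_add hb ?_)
  rw [← q_left]
  exact rd_l ha _

theorem dh_mul (A B : Hq[X]) : dhQ (A * B) = dhQ A * dhQ B := Polynomial.map_mul _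
theorem dh_add (A B : Hq[X]) : dhQ (A + B) = dhQ A + dhQ B := Polynomial.map_add _

theorem mp_coeff (P D : Hq[X]) (n : ℕ) : (mp P D).coeff n = inl (P.coeff n) + inr (D.coeff n) := by
  unfold mp dhQ
  rw [coeff_add, coeff_C_mul, coeff_map, coeff_map]
  ext1 <;> simp

theorem mp_inj {P D P' D' : Hq[X]} (h : mp P D = mp P' D') : P = P' ∧ D = D' := by
  have h1 := fun n => congrArg (fun A => coeff A n) h
  simp only [mp_coeff] at h1
  constructor
  · ext1 n
    simpa using congrArg TrivSqZeroExt.fst (h1 n)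
  · ext1 n
    simpa using congrArg TrivSqZeroExt.snd (h1 n)

theorem eps_comm (A : Hq[X]) : dhQ A * C (ε : DHq) = C ε * dhQ A := by
  ext1 n
  rw [coeff_mul_C, coeff_C_mul, dhQ, coeff_map]
  ext1 <;> simp

theorem mp_mul (P D P' D' : Hq[X]) : mp P D * mp P' D' = mp (P * P') (P * D' + D * P') := by
  have h0 : (C (ε : DHq)) * C ε = 0 := by rw [← C_mul, DualNumber.eps_mul_eps, C_0]
  unfold mp
  rw [dh_mul, dh_add, dh_mul, dh_mul, mul_add, add_mul, add_mul, mul_add, ← mul_assoc (dhQ P),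
    eps_comm, mul_assoc _ (dhQ D), mul_assoc _ (dhQ D), ← mul_assoc (dhQ D), eps_comm,
    mul_assoc (C ε) (dhQ D), ← mul_assoc (C ε) (C ε), h0, zero_mul, add_zero, mul_assoc]
  abel

theorem lin_eq (h : DHq) : X - C h = mp (X - C h.fst) (-C h.snd) := by
  ext1 n
  rw [mp_coeff, coeff_sub, coeff_sub, coeff_neg, coeff_X, coeff_X, coeff_C, coeff_C, coeff_C]
  split_ifs <;> ext1 <;> simp

theorem mp_one : mp 1 0 = 1 := by
  simp [mp, dhQ]

theorem primal_mp (P D : Hq[X]) : primal (mp P D) = P := by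
  ext1 n
  rw [primal, coeff_map, mp_coeff]
  simp

theorem cs_lin (h : DHq) : cstar (X - C h) = X - C (star h) := by
  have h1 : star (1 : DHq) = 1 := by
    change inl (star (1 : DHq).fst) + inr (star (1 : DHq).snd) = 1
    ext1 <;> simp
  have h0 : star (0 : DHq) = 0 := by
    change inl (star (0 : DHq).fst) + inr (star (0 : DHq).snd) = 0
    ext1 <;> simp
  have hn : star (-h) = - star h := by
    change inl (star (-h).fst) + inr (star (-h).snd) = -(inl (star h.fst) + inr (star h.snd))
    ext1 <;> simp
  unfold cstar
  rw [Polynomial.sum_over_range' _ (by intro n; rw [h0, C_0, zero_mul]) 2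
    (by rw [natDegree_X_sub_C]; norm_num)]
  rw [Finset.sum_range_succ, Finset.sum_range_succ]
  simp [coeff_C, coeff_X, h1, hn]
  abel

theorem motion_lin {h : DHq} (hm : IsMotion (X - C h)) : h.fst * h.snd = h.snd * star h.fst := by
  obtain ⟨f, _, hf⟩ := hm
  rw [cs_lin, lin_eq h, lin_eq (star h), mp_mul] at hf
  have h2 : dPoly f = mp (qPoly f) 0 := by simp [mp, dPoly, dhQ]
  rw [h2] at hf
  have h3 := (mp_inj hf).2
  have hs1 : (star h).fst = star h.fst := by
    change (inl (star h.fst) + inr (star h.snd) : DHq).fst = _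
    simp
  have hs2 : (star h).snd = star h.snd := by
    change (inl (star h.fst) + inr (star h.snd) : DHq).snd = _
    simp
  rw [hs1, hs2] at h3
  have c0 := congrArg (fun A => coeff A 0) h3
  have c1 := congrArg (fun A => coeff A 1) h3
  simp [sub_mul, mul_sub, coeff_C, mul_coeff_zero, -map_mul] at c0 c1
  have hs : star h.snd = - h.snd := by
    rw [eq_neg_iff_add_eq_zero]
    have := congrArg Neg.neg c1
    simpa [add_comm] using this
  rw [hs] at c0
  have : h.snd * star h.fst - h.fst * h.snd = 0 := by
    rw [← c0]; simp; abel
  exact (sub_eq_zero.mp this).symm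

theorem mainInd (L : List DHq) : (∀ h ∈ L, IsMotion (X - C h)) →
    ∃ P D, (L.map fun h => X - C h).prod = mp P D ∧
      ((∀ a : ℝ, ¬ RDvdQ (X - C a) P) →
        (∀ f : ℝ[X], f.Monic → RDvdQ f P → RDvdQ f D → f = 1) →
        ∃ c Q, c ≠ 0 ∧ ReducedQ Q ∧ qPoly c * Q = P ∧ Phi c Q D) := by
  induction L with
  | nil =>
    intro _
    refine ⟨1, 0, by simp [mp_one], fun _ hr => ⟨1, 1, one_ne_zero, ?_, by rw [q_one, one_mul], ?_⟩⟩
    · intro f hf hd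
      exact hr f hf hd ⟨0, by simp⟩
    · intro g _ _ _
      exact ⟨0, by simp⟩
  | cons h L ih =>
    intro hL
    obtain ⟨P, D, h1, h2⟩ := ih (fun k hk => hL k (List.mem_cons_of_mem _ hk))
    have hm := motion_lin (hL h List.mem_cons_self)
    refine ⟨_, _, by rw [List.map_cons, List.prod_cons, h1, lin_eq, mp_mul], ?_⟩
    set p := h.fst
    set d := h.snd
    intro hb hr
    have hp : star p ≠ p := by
      intro hp
      have := Quaternion.star_eq_self.mp hp
      apply hb p.re
      refine ⟨P, ?_⟩
      congr 1
      rw [qPoly, Polynomial.map_sub, map_X, map_C]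
      congr 2
    obtain ⟨c, Q, hc, hQ, rfl, hPhi⟩ := h2 (fun a ha => hb a (rd_l ha _))
      (fun f hf ha hb => hr f hf (rd_l ha _) (rd_add (rd_l hb _) (rd_l ha _)))
    have hw : p - star p ≠ 0 := sub_ne_zero.mpr (Ne.symm hp)
    have hx : p * (d * (p - star p)⁻¹) - d * (p - star p)⁻¹ * p = - d := by
      have hcm : (p - star p)⁻¹ * p = p * (p - star p)⁻¹ := by
        have : Commute (p - star p) p := by
          have h5 : star p * p = p * star p := by
            rw [Quaternion.self_mul_star, Quaternion.star_mul_self]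
          unfold Commute SemiconjBy
          rw [sub_mul, mul_sub, h5]
        exact (this.inv_left₀).eq
      rw [mul_assoc d, hcm, ← mul_assoc, ← mul_assoc, hm, ← sub_mul, ← mul_sub,
        ← neg_sub p, mul_neg, neg_mul, mul_assoc, mul_inv_cancel₀ hw, mul_one]
    obtain ⟨c', Q', a1, a2, a3, a4⟩ := stepG (x := d * (p - star p)⁻¹) hp hc hQ hPhi
    refine ⟨c', Q', a1, a2, a3, ?_⟩
    rw [hx, C_neg] at a4
    apply a4
    intro f hf ha
    rw [a3] at ha
    exact hr f hf ha

theorem uniq {c c' : ℝ[X]} {Q Q' : Hq[X]} (hc : c ≠ 0)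
    (hQ' : ReducedQ Q') (h : qPoly c * Q = qPoly c' * Q') : c ∣ c' := by
  obtain ⟨a, ha⟩ := EuclideanDomain.gcd_dvd_left c c'
  obtain ⟨b, hb⟩ := EuclideanDomain.gcd_dvd_right c c'
  have hab := EuclideanDomain.gcd_eq_gcd_ab c c'
  set d := EuclideanDomain.gcd c c'
  generalize EuclideanDomain.gcdA c c' = x at hab
  generalize EuclideanDomain.gcdB c c' = y at hab
  have hd0 : d ≠ 0 := by
    intro h0
    rw [h0, zero_mul] at ha
    exact hc ha
  have ha0 : a ≠ 0 := by
    intro h0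
    rw [h0, mul_zero] at ha
    exact hc ha
  have hcop : IsCoprime a b := by
    refine ⟨x, y, mul_left_cancel₀ hd0 ?_⟩
    rw [mul_one]
    nth_rw 2 [hab]
    rw [ha, hb]; ring
  have h1 : qPoly a * Q = qPoly b * Q' := by
    apply mul_left_cancel₀ (q_ne hd0)
    rw [← mul_assoc, ← mul_assoc, ← q_mul, ← q_mul, ← ha, ← hb, h]
  have h2 : RDvdQ a Q' := rd_cop hcop ⟨Q, h1.symm⟩
  have hlc : a.leadingCoeff ≠ 0 := leadingCoeff_ne_zero.mpr ha0
  have h3 := hQ' (a * C a.leadingCoeff⁻¹) (monic_mul_leadingCoeff_inv ha0)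
    (rd_mono ⟨C a.leadingCoeff, by
      rw [mul_assoc, ← C_mul, inv_mul_cancel₀ hlc, C_1, mul_one]⟩ h2)
  refine ⟨C a.leadingCoeff⁻¹ * b, ?_⟩
  rw [hb]
  conv_rhs => rw [ha]
  rw [mul_assoc, ← mul_assoc a, h3, one_mul]

end
/-- Necessity: if a bounded monic reduced motion polynomial `M = cQ + εD` with reduced `Q`
admits a factorization into monic linear motion polynomial factors then `c·g` divides
`D·D*`. -/
theorem final_characterization_necessity
    (c : ℝ[X]) (Q D : Hq[X]) (g : ℝ[X]) (M : DHq[X])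
    (hM : M = mp (qPoly c * Q) D)
    (hmonic : M.Monic) (hmotion : IsMotion M)
    (hred : ReducedD M) (hbdd : BoundedD M) (hQred : ReducedQ Q)
    (hg : IsMrpf3 g c (D * cstar Q) (cstar Q * D))
    (hfact : HasLinFact M) :
    RDvdQ (c * g) (D * cstar D) := by
  obtain ⟨hg1, hg2, hg3, hg4, _⟩ := hg
  obtain ⟨L, hL, hprod⟩ := hfact
  obtain ⟨P, D', h1, h2⟩ := mainInd L hL
  rw [h1, hM] at hprod
  obtain ⟨rfl, rfl⟩ := mp_inj hprod
  rw [hM] at hred hbdd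
  unfold BoundedD at hbdd
  rw [primal_mp] at hbdd
  obtain ⟨c1, Q1, hc1, hQ1, he, hPhi⟩ := h2 hbdd (by
    rintro f hf ⟨A, hA⟩ ⟨B, hB⟩
    apply hred f hf
    refine ⟨mp A B, ?_⟩
    have h2 : dPoly f = mp (qPoly f) 0 := by simp [mp, dPoly, dhQ]
    rw [h2, mp_mul, hA, hB, zero_mul, add_zero])
  have hc : c ≠ 0 := by
    rintro rfl
    apply hbdd 0
    exact ⟨0, by simp [qPoly]⟩
  have d1 : c ∣ c1 := uniq hc hQ1 he.symm
  obtain ⟨v, hv⟩ : c1 ∣ c := uniq hc1 hQred he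
  have hQ : Q1 = qPoly v * Q := by
    apply mul_left_cancel₀ (q_ne hc1)
    rw [he, hv, q_mul, mul_assoc]
  refine rd_mono (mul_dvd_mul_right d1 g) (hPhi g (hg2.trans d1) ?_ ?_)
  · rw [hQ, cs_mul, cs_q, ← mul_assoc]
    exact rd_r hg3 _
  · rw [hQ, cs_mul, cs_q, q_comm, mul_assoc]
    exact rd_l hg4 _
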